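/- There exist constants c > 0 and ε₀ > 0 such that for every integer n ≥ 2, Kac's random walk on SO(n) satisfies τ_{hs,1}(ε₀) ≥ c·n²; that is, for every integer t < c·n² there exists a probability measure μ on SO(n) with W_{hs,1}(μK^t, H) > ε₀, where H is the Haar probability measure on SO(n). -/

import Mathlib

open MeasureTheory ENNReal Filter Topology Matrix

noncomputable section

/-- The (Borel) product measurable structure on matrices. -/
instance matrixMeasurableSpace {m n R : Type*} [MeasurableSpace R] :
    MeasurableSpace (Matrix m n R) :=
  (inferInstance : MeasurableSpace (m → n → R))

/-- `η` is a coupling of `μ` and `ν`: its two marginals are `μ` and `ν`. -/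
def IsCoupling {X : Type*} [MeasurableSpace X] (η : Measure (X × X)) (μ ν : Measure X) : Prop :=
  η.map Prod.fst = μ ∧ η.map Prod.snd = ν

/-- The `L^p` transportation cost (Wasserstein) distance associated with the distance
function `d`, with values in `ℝ≥0∞`:
`W_{d,p}(μ,ν) = inf { (∫ d(x,y)^p dη)^{1/p} : η a coupling of (μ,ν) }`. -/
def wassersteinE {X : Type*} [MeasurableSpace X] (d : X → X → ℝ≥0∞) (p : ℝ)
    (μ ν : Measure X) : ℝ≥0∞ :=
  ⨅ (η : Measure (X × X)) (_ : IsCoupling η μ ν), (∫⁻ z, d z.1 z.2 ^ p ∂η) ^ (1 / p)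

/-- The length of the curve `γ` over `[0,1]`, w.r.t. the distance function `d`:
the supremum, over all partitions `0 = t 0 ≤ t 1 ≤ ⋯ ≤ t k = 1` of `[0,1]`, of the sums of
the distances between consecutive points of the curve. -/
def pathLengthE {X : Type*} (d : X → X → ℝ≥0∞) (γ : ℝ → X) : ℝ≥0∞ :=
  ⨆ (k : ℕ) (t : Fin (k + 1) → ℝ) (_ : Monotone t) (_ : t 0 = 0) (_ : t (Fin.last k) = 1),
    ∑ i : Fin k, d (γ (t i.castSucc)) (γ (t i.succ))

/-- The intrinsic (length) distance on the set `S` induced by the distance function `d`: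
the infimum of `d`-lengths of continuous paths joining `a` to `b` inside `S`. -/
def intrinsicDistE {X : Type*} [TopologicalSpace X] (d : X → X → ℝ≥0∞) (S : Set X)
    (a b : X) : ℝ≥0∞ :=
  ⨅ (γ : ℝ → X) (_ : ContinuousOn γ (Set.Icc 0 1)) (_ : Set.MapsTo γ (Set.Icc 0 1) S)
    (_ : γ 0 = a) (_ : γ 1 = b), pathLengthE d γ

/-- `t` iterated steps of the Markov transition kernel `P`, started from the initial
distribution `μ` (so `kernelIterate P t μ = μP^t`). -/
def kernelIterate {X : Type*} [MeasurableSpace X] (P : X → Measure X) :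
    ℕ → Measure X → Measure X
  | 0, μ => μ
  | t + 1, μ => (kernelIterate P t μ).bind P

/-- A Haar probability measure for the multiplicative set `S`, viewed as a measure on the
ambient space: a probability measure carried by `S` that is invariant under left and right
translations by all elements of `S`. -/
def IsHaarLike {X : Type*} [MeasurableSpace X] [Mul X] (S : Set X) (μ : Measure X) : Prop :=
  IsProbabilityMeasure μ ∧ μ Sᶜ = 0 ∧
    ∀ a ∈ S, μ.map (fun x => a * x) = μ ∧ μ.map (fun x => x * a) = μ

/-- The Haar probability measure of a compact matrix group `S` (such as `SO(n)` or `U(n)`),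
viewed as a measure on the ambient matrix space.  For such `S` a translation-invariant
probability measure exists and is unique, so `haarLike S` is *the* Haar probability
measure of `S`. -/
def haarLike {X : Type*} [MeasurableSpace X] [Mul X] (S : Set X) : Measure X := by
  classical exact if h : ∃ μ, IsHaarLike S μ then h.choose else 0

/-- The set of pairs `1 ≤ i < j ≤ n` of indices. -/
def pairs (n : ℕ) : Finset (Fin n × Fin n) :=
  Finset.univ.filter fun p => p.1 < p.2

/-- The special orthogonal group `SO(n)`, as a subset of the `n × n` real matrices. -/
def SO (n : ℕ) : Set (Matrix (Fin n) (Fin n) ℝ) :=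
  {a | a * aᵀ = 1 ∧ a.det = 1}

/-- The Hilbert–Schmidt (Frobenius) distance `‖a - b‖_hs = √(Tr((a-b)ᵀ(a-b)))` between real
matrices, as an `ℝ≥0∞`-valued distance function. -/
def hsDist {n : ℕ} (a b : Matrix (Fin n) (Fin n) ℝ) : ℝ≥0∞ :=
  ENNReal.ofReal (Real.sqrt (Matrix.trace ((a - b)ᵀ * (a - b))))

/-- The intrinsic (Riemannian/length) metric `D` on `SO(n)` induced by the Hilbert–Schmidt
norm: the infimum of `hs`-lengths of continuous paths inside `SO(n)`. -/
def DSO (n : ℕ) (a b : Matrix (Fin n) (Fin n) ℝ) : ℝ≥0∞ :=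
  intrinsicDistE hsDist (SO n) a b

/-- The rotation `R(i,j,θ)` by the angle `θ` of the plane spanned by the `i`-th and `j`-th
canonical basis vectors: `R e_i = cos θ e_i + sin θ e_j`, `R e_j = cos θ e_j - sin θ e_i`,
and `R e_k = e_k` for `k ∉ {i,j}`. -/
def kacRot {n : ℕ} (i j : Fin n) (θ : ℝ) : Matrix (Fin n) (Fin n) ℝ :=
  Matrix.of fun k l =>
    if k = i ∧ l = i then Real.cos θ
    else if k = j ∧ l = i then Real.sin θ
    else if k = i ∧ l = j then -Real.sin θ
    else if k = j ∧ l = j then Real.cos θ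
    else if k = l then 1 else 0

/-- The uniform probability measure on the angle interval `[0, 2π]`. -/
def uniformAngle : Measure ℝ :=
  (ENNReal.ofReal (2 * Real.pi))⁻¹ • MeasureTheory.volume.restrict (Set.Icc 0 (2 * Real.pi))

/-- The transition kernel of Kac's random walk on `SO(n)`:
`K_x = (1/(2π·C(n,2))) ∑_{1≤i<j≤n} ∫₀^{2π} δ_{R(i,j,θ)·x} dθ`. -/
def kacKernel (n : ℕ) (x : Matrix (Fin n) (Fin n) ℝ) : Measure (Matrix (Fin n) (Fin n) ℝ) :=
  (n.choose 2 : ℝ≥0∞)⁻¹ •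
    ∑ p ∈ pairs n, uniformAngle.map fun θ => kacRot p.1 p.2 θ * x

/-!
The points reachable in `t` steps from the identity form a set of dimension at most `t`. Rounding
the angles to multiples of `2π / (9 n²)` shows that, for `t ≤ n²`, the walk stays within distance
`1` of a set `S` of at most `n ^ (5t)` rotations. If the walk were `1/4`-close to Haar measure, the
`2`-neighbourhood of `S` would have Haar measure more than `1/2`, so it would meet its left
translate by any `g ∈ SO(n)`; hence every `g` is within distance `4` of the set of the `a bᵀ` with
`a, b ∈ S`.

On the other hand every `m × m` matrix `x` with `‖x xᵀ‖ ≤ 1`, `2m ≤ n`, is the corner of some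
element of `SO(n)`. A matrix whose entries are independent and uniform in `[-s, s]` with
`s⁴ ≍ m⁻³` satisfies this bound with probability at least `1/2`, by a fourth moment computation,
while by a Chernoff bound it lies in a given Frobenius ball of radius `4` with probability at most
`(C / m) ^ (m² / 4)`. Covering `SO(n)` by balls of radius `4` thus takes at least `n ^ (c n²)` of
them, which forces `t` to be of order `n²`.
-/

open scoped Matrix.Norms.Frobenius Pointwise

section Frobenius

variable {m n p q : Type*} [Fintype m] [Fintype n] [Fintype p] [Fintype q]

lemma frobenius_norm_sq_eq_sum (a : Matrix m n ℝ) : ‖a‖ ^ 2 = ∑ i, ∑ j, a i j ^ 2 := by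
  rw [frobenius_norm_def, ← Real.sqrt_eq_rpow, Real.sq_sqrt (by positivity)]
  simp

lemma trace_transpose_mul_self_eq_norm_sq (a : Matrix m n ℝ) : trace (aᵀ * a) = ‖a‖ ^ 2 := by
  simp only [frobenius_norm_sq_eq_sum, trace, diag_apply, mul_apply, transpose_apply, ← sq]
  exact Finset.sum_comm

lemma hsDist_eq_edist {n : ℕ} : (hsDist : Matrix (Fin n) (Fin n) ℝ → _ → ℝ≥0∞) = edist := by
  ext a b
  rw [hsDist, trace_transpose_mul_self_eq_norm_sq, Real.sqrt_sq (norm_nonneg _), edist_dist,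
    dist_eq_norm]

lemma frobenius_norm_submatrix_le (a : Matrix m n ℝ) {f : p → m} {g : q → n}
    (hf : Function.Injective f) (hg : Function.Injective g) : ‖a.submatrix f g‖ ≤ ‖a‖ := by
  rw [← sq_le_sq₀ (norm_nonneg _) (norm_nonneg _)]
  simp only [frobenius_norm_sq_eq_sum, submatrix_apply, ← Fintype.sum_prod_type']
  calc ∑ x : p × q, a (f x.1) (g x.2) ^ 2
      = ∑ x ∈ Finset.univ.map ⟨Prod.map f g, hf.prodMap hg⟩, a x.1 x.2 ^ 2 := by
        rw [Finset.sum_map]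
        rfl
    _ ≤ ∑ x : m × n, a x.1 x.2 ^ 2 :=
        Finset.sum_le_sum_of_subset_of_nonneg (Finset.subset_univ _) fun _ _ _ => sq_nonneg _

variable [DecidableEq n]

lemma frobenius_norm_mul_of_transpose_mul_self_eq_one {g : Matrix m n ℝ} (hg : gᵀ * g = 1)
    (a : Matrix n p ℝ) : ‖g * a‖ = ‖a‖ := by
  rw [← sq_eq_sq₀ (norm_nonneg _) (norm_nonneg _), ← trace_transpose_mul_self_eq_norm_sq,
    ← trace_transpose_mul_self_eq_norm_sq, transpose_mul, Matrix.mul_assoc, ← Matrix.mul_assoc gᵀ,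
    hg, Matrix.one_mul]

lemma frobenius_norm_mul_of_mul_transpose_self_eq_one {g : Matrix n m ℝ} (hg : g * gᵀ = 1)
    (a : Matrix p n ℝ) : ‖a * g‖ = ‖a‖ := by
  rw [← frobenius_norm_transpose, transpose_mul,
    frobenius_norm_mul_of_transpose_mul_self_eq_one (by rwa [transpose_transpose]),
    frobenius_norm_transpose]

end Frobenius

section SpecialOrthogonal

variable {n : ℕ} {g : Matrix (Fin n) (Fin n) ℝ}

lemma SO_eq_coe_specialOrthogonalGroup :
    SO n = (specialOrthogonalGroup (Fin n) ℝ : Set (Matrix (Fin n) (Fin n) ℝ)) := by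
  ext a
  rw [SetLike.mem_coe, mem_specialOrthogonalGroup_iff, mem_orthogonalGroup_iff]
  rfl

lemma one_mem_SO : (1 : Matrix (Fin n) (Fin n) ℝ) ∈ SO n := by
  simp [SO]

lemma transpose_mul_self_of_mem_SO (hg : g ∈ SO n) : gᵀ * g = 1 :=
  mul_eq_one_comm.mp hg.1

lemma isometry_mul_left_of_mem_SO (hg : g ∈ SO n) : Isometry (g * ·) := by
  refine Isometry.of_dist_eq fun a b => ?_
  rw [dist_eq_norm, dist_eq_norm, ← mul_sub,
    frobenius_norm_mul_of_transpose_mul_self_eq_one (transpose_mul_self_of_mem_SO hg)]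

lemma isometry_mul_right_of_mem_SO (hg : g ∈ SO n) : Isometry (· * g) := by
  refine Isometry.of_dist_eq fun a b => ?_
  rw [dist_eq_norm, dist_eq_norm, ← sub_mul, frobenius_norm_mul_of_mul_transpose_self_eq_one hg.1]

lemma norm_sub_one_sq_of_mem_SO (hg : g ∈ SO n) : ‖g - 1‖ ^ 2 = 2 * n - 2 * trace g := by
  have expand : (g - 1)ᵀ * (g - 1) = gᵀ * g - gᵀ - g + 1 := by
    rw [transpose_sub, transpose_one]
    noncomm_ring
  rw [← trace_transpose_mul_self_eq_norm_sq, expand, transpose_mul_self_of_mem_SO hg]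
  simp only [trace_add, trace_sub, trace_one, trace_transpose, Fintype.card_fin]
  ring

end SpecialOrthogonal

section Rotations

variable {n : ℕ} {i j : Fin n}

/-- The orthogonal projection onto the plane spanned by `e_i` and `e_j`, for `i ≠ j`. -/
def planeProj (i j : Fin n) : Matrix (Fin n) (Fin n) ℝ := single i i 1 + single j j 1

/-- The generator of the rotations `kacRot i j`: the quarter turn of the plane spanned by `e_i`
and `e_j`, extended by `0`. -/
def planeTurn (i j : Fin n) : Matrix (Fin n) (Fin n) ℝ := single j i 1 - single i j 1

lemma planeProj_mul_planeProj (hij : i ≠ j) : planeProj i j * planeProj i j = planeProj i j := by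
  simp [planeProj, add_mul, mul_add, hij, hij.symm]

lemma planeProj_mul_planeTurn (hij : i ≠ j) : planeProj i j * planeTurn i j = planeTurn i j := by
  simp [planeProj, planeTurn, add_mul, mul_sub, hij, hij.symm]

lemma planeTurn_mul_planeProj (hij : i ≠ j) : planeTurn i j * planeProj i j = planeTurn i j := by
  simp only [planeProj, planeTurn, sub_mul, mul_add, single_mul_single_same,
    single_mul_single_of_ne _ _ _ _ hij, single_mul_single_of_ne _ _ _ _ hij.symm, mul_one]
  abel

lemma planeTurn_mul_planeTurn (hij : i ≠ j) : planeTurn i j * planeTurn i j = -planeProj i j := by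
  simp only [planeProj, planeTurn, sub_mul, mul_sub, single_mul_single_same,
    single_mul_single_of_ne _ _ _ _ hij, single_mul_single_of_ne _ _ _ _ hij.symm, mul_one]
  abel

lemma kacRot_eq (hij : i ≠ j) (θ : ℝ) :
    kacRot i j θ = 1 + (Real.cos θ - 1) • planeProj i j + Real.sin θ • planeTurn i j := by
  ext k l
  simp only [kacRot, planeProj, planeTurn, of_apply, Matrix.add_apply, Matrix.sub_apply,
    Matrix.smul_apply, single_apply, one_apply, smul_eq_mul]
  grind

lemma kacRot_zero (hij : i ≠ j) : kacRot i j 0 = 1 := by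
  simp [kacRot_eq hij]

lemma kacRot_mul_kacRot (hij : i ≠ j) (θ φ : ℝ) :
    kacRot i j θ * kacRot i j φ = kacRot i j (θ + φ) := by
  simp only [kacRot_eq hij, add_mul, mul_add, one_mul, mul_one, smul_mul_smul_comm,
    planeProj_mul_planeProj hij, planeProj_mul_planeTurn hij, planeTurn_mul_planeProj hij,
    planeTurn_mul_planeTurn hij, Real.cos_add, Real.sin_add]
  module

lemma transpose_kacRot (hij : i ≠ j) (θ : ℝ) : (kacRot i j θ)ᵀ = kacRot i j (-θ) := by
  simp only [kacRot_eq hij, planeProj, planeTurn, transpose_add, transpose_sub, transpose_smul,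
    transpose_one, transpose_single, Real.cos_neg, Real.sin_neg]
  module

lemma trace_kacRot (hij : i ≠ j) (θ : ℝ) : trace (kacRot i j θ) = n - 2 + 2 * Real.cos θ := by
  simp only [kacRot_eq hij, planeProj, planeTurn, trace_add, trace_sub, trace_smul, trace_one,
    Fintype.card_fin, trace_single_eq_same, trace_single_eq_of_ne _ _ _ hij,
    trace_single_eq_of_ne _ _ _ hij.symm, smul_eq_mul]
  ring

lemma kacRot_mem_SO (hij : i ≠ j) (θ : ℝ) : kacRot i j θ ∈ SO n := by
  have orthogonal (φ : ℝ) : kacRot i j φ * (kacRot i j φ)ᵀ = 1 := by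
    rw [transpose_kacRot hij, kacRot_mul_kacRot hij, add_neg_cancel, kacRot_zero hij]
  refine ⟨orthogonal θ, ?_⟩
  have det_sq := congrArg det (orthogonal (θ / 2))
  rw [det_mul, det_transpose, det_one] at det_sq
  rw [← add_halves θ, ← kacRot_mul_kacRot hij, det_mul, det_sq]

lemma norm_kacRot_sub_one_sq (hij : i ≠ j) (θ : ℝ) :
    ‖kacRot i j θ - 1‖ ^ 2 = 4 * (1 - Real.cos θ) := by
  rw [norm_sub_one_sq_of_mem_SO (kacRot_mem_SO hij θ), trace_kacRot hij]
  ring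

lemma dist_kacRot_le (hij : i ≠ j) (θ φ : ℝ) :
    dist (kacRot i j θ) (kacRot i j φ) ≤ √2 * |θ - φ| := by
  have dist_eq : dist (kacRot i j θ) (kacRot i j φ) = ‖kacRot i j (θ - φ) - 1‖ := by
    rw [← dist_eq_norm, ← (isometry_mul_right_of_mem_SO (kacRot_mem_SO hij φ)).dist_eq _ 1]
    simp only [kacRot_mul_kacRot hij, sub_add_cancel, one_mul]
  rw [dist_eq, ← Real.sqrt_sq_eq_abs, ← Real.sqrt_mul zero_le_two]
  refine Real.le_sqrt_of_sq_le ?_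
  rw [norm_kacRot_sub_one_sq hij]
  linarith [Real.one_sub_sq_div_two_le_cos (x := θ - φ)]

lemma continuous_kacRot (hij : i ≠ j) : Continuous (kacRot i j) := by
  simp only [funext (kacRot_eq hij)]
  fun_prop

end Rotations

section Transport

variable {X : Type*} [PseudoMetricSpace X]

lemma ofReal_le_edist_of_mem_cthickening {r δ : ℝ} (hr : 0 ≤ r) (hδ : 0 ≤ δ) {s : Set X} {x y : X}
    (hx : x ∈ Metric.cthickening r s) (hy : y ∉ Metric.cthickening (r + δ) s) :
    ENNReal.ofReal δ ≤ edist x y := by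
  contrapose! hy
  rw [Metric.mem_cthickening_iff] at hx ⊢
  calc Metric.infEDist y s
      ≤ Metric.infEDist x s + edist y x := Metric.infEDist_le_infEDist_add_edist
    _ ≤ ENNReal.ofReal r + ENNReal.ofReal δ := add_le_add hx (edist_comm x y ▸ hy.le)
    _ = ENNReal.ofReal (r + δ) := (ENNReal.ofReal_add hr hδ).symm

lemma ofReal_mul_measure_compl_cthickening_le_wassersteinE [MeasurableSpace X]
    [OpensMeasurableSpace X] {ν H : Measure X} {s : Set X}
    {r δ p : ℝ} (hr : 0 ≤ r) (hδ : 0 ≤ δ) (hp : 0 < p)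
    (hν : ∀ᵐ x ∂ν, x ∈ Metric.cthickening r s) :
    ENNReal.ofReal δ * H (Metric.cthickening (r + δ) s)ᶜ ^ (1 / p) ≤ wassersteinE edist p ν H := by
  refine le_iInf₂ fun η hη => ?_
  have measurable_far : MeasurableSet (Metric.cthickening (r + δ) s)ᶜ :=
    Metric.isClosed_cthickening.measurableSet.compl
  have near : ∀ᵐ z ∂η, z.1 ∈ Metric.cthickening r s :=
    ae_of_ae_map measurable_fst.aemeasurable (hη.1 ▸ hν)
  have cost : ENNReal.ofReal δ ^ p * H (Metric.cthickening (r + δ) s)ᶜ ≤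
      ∫⁻ z, edist z.1 z.2 ^ p ∂η := by
    rw [← hη.2, Measure.map_apply measurable_snd measurable_far, ← setLIntegral_const]
    refine le_trans (setLIntegral_mono_ae' (measurable_snd measurable_far) ?_)
      (setLIntegral_le_lintegral _ _)
    filter_upwards [near] with z hz hz'
    exact ENNReal.rpow_le_rpow (ofReal_le_edist_of_mem_cthickening hr hδ hz hz') hp.le
  calc ENNReal.ofReal δ * H (Metric.cthickening (r + δ) s)ᶜ ^ (1 / p)
      = (ENNReal.ofReal δ ^ p * H (Metric.cthickening (r + δ) s)ᶜ) ^ (1 / p) := by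
        rw [ENNReal.mul_rpow_of_nonneg _ _ (by positivity), ← ENNReal.rpow_mul,
          mul_one_div_cancel hp.ne', ENNReal.rpow_one]
    _ ≤ _ := ENNReal.rpow_le_rpow cost (by positivity)

end Transport

lemma ae_mem_kernelIterate {X : Type*} [MeasurableSpace X] {P : X → Measure X} (hP : Measurable P)
    {μ : Measure X} {A : ℕ → Set X} (hA : ∀ t, MeasurableSet (A t)) (h_zero : ∀ᵐ x ∂μ, x ∈ A 0)
    (h_succ : ∀ t, ∀ x ∈ A t, ∀ᵐ y ∂P x, y ∈ A (t + 1)) (t : ℕ) :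
    ∀ᵐ x ∂kernelIterate P t μ, x ∈ A t := by
  induction t with
  | zero => exact h_zero
  | succ t ih =>
    rw [ae_iff, ← Set.compl_def, kernelIterate,
      Measure.bind_apply (hA (t + 1)).compl hP.aemeasurable]
    refine lintegral_eq_zero_of_ae_eq_zero ?_
    filter_upwards [ih] with x hx using h_succ t x hx

section Kernel

lemma measurable_map_prod_left {X Y Z : Type*} [MeasurableSpace X] [MeasurableSpace Y]
    [MeasurableSpace Z] (ν : Measure X) [SFinite ν] {f : X × Y → Z} (hf : Measurable f) :
    Measurable fun y => ν.map fun x => f (x, y) := by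
  have (y : Y) : (ν.map fun x => f (x, y)) = (ν.map fun x => (x, y)).map f :=
    (Measure.map_map hf measurable_prodMk_right).symm
  simp only [this]
  exact (Measure.measurable_map f hf).comp Measurable.map_prodMk_right

instance borelSpace_matrix {m n : Type*} [Countable m] [Countable n] :
    BorelSpace (Matrix m n ℝ) :=
  inferInstanceAs (BorelSpace (m → n → ℝ))

instance secondCountableTopology_matrix {m n : Type*} [Countable m] [Countable n] :
    SecondCountableTopology (Matrix m n ℝ) :=
  inferInstanceAs (SecondCountableTopology (m → n → ℝ))

-- The Frobenius topology is the product topology only after unfolding instances.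
instance borelSpace_matrix_frobenius {m n : Type*} [Fintype m] [Fintype n] :
    @BorelSpace (Matrix m n ℝ) PseudoMetricSpace.toUniformSpace.toTopologicalSpace _ :=
  borelSpace_matrix

variable {n : ℕ}

lemma ne_of_mem_pairs {p : Fin n × Fin n} (hp : p ∈ pairs n) : p.1 ≠ p.2 :=
  (Finset.mem_filter.mp hp).2.ne

lemma measurable_kacRot_mul {p : Fin n × Fin n} (hp : p ∈ pairs n) :
    Measurable fun z : ℝ × Matrix (Fin n) (Fin n) ℝ => kacRot p.1 p.2 z.1 * z.2 :=
  ((continuous_kacRot (ne_of_mem_pairs hp)).measurable.comp measurable_fst).mul measurable_snd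

instance isFiniteMeasure_uniformAngle : IsFiniteMeasure uniformAngle :=
  Measure.smul_finite _ (by simp [Real.pi_pos])

lemma measurable_kacKernel : Measurable (kacKernel n) := by
  refine Measure.measurable_of_measurable_coe _ fun s hs => ?_
  simp only [kacKernel, Measure.smul_apply, Measure.finsetSum_apply, smul_eq_mul]
  exact Measurable.const_mul (Finset.measurable_sum _ fun p hp => (Measure.measurable_coe hs).comp
    (measurable_map_prod_left uniformAngle (measurable_kacRot_mul hp))) _

lemma ae_kacKernel_mem {s : Set (Matrix (Fin n) (Fin n) ℝ)} (hs : MeasurableSet s)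
    {x : Matrix (Fin n) (Fin n) ℝ}
    (h : ∀ p ∈ pairs n, ∀ θ ∈ Set.Icc 0 (2 * Real.pi), kacRot p.1 p.2 θ * x ∈ s) :
    ∀ᵐ y ∂kacKernel n x, y ∈ s := by
  refine Measure.ae_smul_measure (ae_finsetSum_measure_iff.mpr fun p hp => ?_) _
  have measurable_step : Measurable fun θ => kacRot p.1 p.2 θ * x :=
    (continuous_kacRot (ne_of_mem_pairs hp)).measurable.mul_const x
  refine (ae_map_iff (p := (· ∈ s)) measurable_step.aemeasurable hs).mpr ?_
  exact Measure.ae_smul_measure (ae_restrict_of_forall_mem measurableSet_Icc (h p hp)) _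

end Kernel

section Nets

open Metric

variable {n : ℕ}

lemma mem_cthickening_finset_iff {X : Type*} [PseudoMetricSpace X] {r : ℝ} (hr : 0 ≤ r)
    {s : Finset X} {x : X} : x ∈ cthickening r s ↔ ∃ b ∈ s, dist x b ≤ r := by
  simp [s.finite_toSet.isCompact.cthickening_eq_biUnion_closedBall hr]

lemma mul_mem_cthickening_mul {S T : Finset (Matrix (Fin n) (Fin n) ℝ)} {r ρ : ℝ} (hr : 0 ≤ r)
    (hρ : 0 ≤ ρ) (hT : ↑T ⊆ SO n) {a x : Matrix (Fin n) (Fin n) ℝ} (ha : a ∈ SO n)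
    (haS : a ∈ cthickening ρ (S : Set (Matrix (Fin n) (Fin n) ℝ)))
    (hxT : x ∈ cthickening r (T : Set (Matrix (Fin n) (Fin n) ℝ))) :
    a * x ∈ cthickening (r + ρ) ((S * T : Finset _) : Set (Matrix (Fin n) (Fin n) ℝ)) := by
  rw [mem_cthickening_finset_iff (by positivity)] at *
  obtain ⟨b, hb, hab⟩ := haS
  obtain ⟨y, hy, hxy⟩ := hxT
  refine ⟨b * y, Finset.mul_mem_mul hb hy, ?_⟩
  calc dist (a * x) (b * y) ≤ dist (a * x) (a * y) + dist (a * y) (b * y) := dist_triangle ..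
    _ = dist x y + dist a b := by
      rw [(isometry_mul_left_of_mem_SO ha).dist_eq,
        (isometry_mul_right_of_mem_SO (hT hy)).dist_eq]
    _ ≤ r + ρ := add_le_add hxy hab

lemma pow_subset_SO {S : Finset (Matrix (Fin n) (Fin n) ℝ)} (hS : ↑S ⊆ SO n) (t : ℕ) :
    ((S ^ t : Finset _) : Set (Matrix (Fin n) (Fin n) ℝ)) ⊆ SO n := by
  rw [Finset.coe_pow, SO_eq_coe_specialOrthogonalGroup] at *
  exact Submonoid.pow_subset hS

/-- The elementary rotations whose angle lies in the grid of mesh `2π / N`. -/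
def gridRotations (n N : ℕ) : Finset (Matrix (Fin n) (Fin n) ℝ) :=
  (pairs n ×ˢ Finset.range (N + 1)).image fun q =>
    kacRot q.1.1 q.1.2 (q.2 * (2 * Real.pi / N))

lemma card_gridRotations_le (n N : ℕ) : (gridRotations n N).card ≤ (pairs n).card * (N + 1) :=
  Finset.card_image_le.trans_eq (by rw [Finset.card_product, Finset.card_range])

lemma gridRotations_subset_SO (n N : ℕ) : ↑(gridRotations n N) ⊆ SO n := by
  simp only [gridRotations, Finset.coe_image, Set.image_subset_iff]
  rintro ⟨p, k⟩ hq
  exact kacRot_mem_SO (ne_of_mem_pairs (Finset.mem_product.mp hq).1) _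

lemma exists_natCast_mul_div_near {N : ℕ} (hN : N ≠ 0) {L x : ℝ} (hL : 0 < L)
    (hx : x ∈ Set.Icc 0 L) : ∃ k ∈ Finset.range (N + 1), |x - k * (L / N)| ≤ L / N := by
  have mesh_pos : 0 < L / N := by positivity
  have floor_le : ⌊x / (L / N)⌋₊ * (L / N) ≤ x :=
    (le_div_iff₀ mesh_pos).mp (Nat.floor_le (div_nonneg hx.1 mesh_pos.le))
  have lt_floor : x < (⌊x / (L / N)⌋₊ + 1) * (L / N) :=
    (div_lt_iff₀ mesh_pos).mp (Nat.lt_floor_add_one _)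
  refine ⟨⌊x / (L / N)⌋₊, ?_, abs_le.mpr ⟨by linarith, by linarith⟩⟩
  rw [Finset.mem_range_succ_iff]
  refine Nat.floor_le_of_le ?_
  rw [div_le_iff₀ mesh_pos, mul_div_cancel₀ _ (by positivity)]
  exact hx.2

lemma kacRot_mem_cthickening_gridRotations {N : ℕ} (hN : N ≠ 0) {p : Fin n × Fin n}
    (hp : p ∈ pairs n) {θ : ℝ} (hθ : θ ∈ Set.Icc 0 (2 * Real.pi)) :
    kacRot p.1 p.2 θ ∈
      cthickening (9 / N) (gridRotations n N : Set (Matrix (Fin n) (Fin n) ℝ)) := by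
  obtain ⟨k, hk, hθk⟩ := exists_natCast_mul_div_near hN Real.two_pi_pos hθ
  rw [mem_cthickening_finset_iff (by positivity)]
  refine ⟨_, Finset.mem_image.mpr ⟨(p, k), Finset.mem_product.mpr ⟨hp, hk⟩, rfl⟩, ?_⟩
  have sqrt_two_mul_two_pi_le : √2 * (2 * Real.pi) ≤ 9 := by
    nlinarith [Real.pi_lt_d2, Real.pi_pos, Real.sqrt_nonneg 2, Real.sq_sqrt zero_le_two]
  calc dist (kacRot p.1 p.2 θ) (kacRot p.1 p.2 (k * (2 * Real.pi / N)))
      ≤ √2 * |θ - k * (2 * Real.pi / N)| := dist_kacRot_le (ne_of_mem_pairs hp) _ _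
    _ ≤ √2 * (2 * Real.pi / N) := by gcongr
    _ = √2 * (2 * Real.pi) / N := by ring
    _ ≤ 9 / N := by gcongr

lemma ae_kernelIterate_kacKernel_mem_cthickening {N : ℕ} (hN : N ≠ 0) (t : ℕ) :
    ∀ᵐ x ∂kernelIterate (kacKernel n) t (Measure.dirac 1), x ∈ cthickening (t * (9 / N))
      ((gridRotations n N ^ t : Finset _) : Set (Matrix (Fin n) (Fin n) ℝ)) := by
  refine ae_mem_kernelIterate measurable_kacKernel
    (A := fun t : ℕ => cthickening (t * (9 / N : ℝ))
      ((gridRotations n N ^ t : Finset _) : Set (Matrix (Fin n) (Fin n) ℝ)))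
    (fun t => isClosed_cthickening.measurableSet) ?_ (fun t x hx => ?_) t
  · simp
  · refine ae_kacKernel_mem isClosed_cthickening.measurableSet fun p hp θ hθ => ?_
    rw [pow_succ', Nat.cast_add_one, add_one_mul]
    exact mul_mem_cthickening_mul (by positivity) (by positivity)
      (pow_subset_SO (gridRotations_subset_SO n N) t) (kacRot_mem_SO (ne_of_mem_pairs hp) θ)
      (kacRot_mem_cthickening_gridRotations hN hp hθ) hx

end Nets

section Haar

lemma isMulRightInvariant_of_isHaarMeasure_of_isProbabilityMeasure {G : Type*} [Group G]
    [TopologicalSpace G] [IsTopologicalGroup G] [LocallyCompactSpace G] [MeasurableSpace G]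
    [BorelSpace G] (μ : Measure G) [μ.IsHaarMeasure] [IsProbabilityMeasure μ] :
    μ.IsMulRightInvariant where
  map_mul_right_eq_self g :=
    have : IsProbabilityMeasure (μ.map (· * g)) :=
      Measure.isProbabilityMeasure_map (measurable_mul_const g).aemeasurable
    Measure.isHaarMeasure_eq_of_isProbabilityMeasure _ _

lemma isHaarLike_range_map {G M : Type*} [Group G] [MeasurableSpace G] [MeasurableMul G] [Monoid M]
    [MeasurableSpace M] [MeasurableMul M] (φ : G →* M) (hφ : Measurable φ)
    (h_range : MeasurableSet (Set.range φ)) (μ : Measure G) [IsProbabilityMeasure μ]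
    [μ.IsMulLeftInvariant] [μ.IsMulRightInvariant] :
    IsHaarLike (Set.range φ) (μ.map φ) := by
  refine ⟨Measure.isProbabilityMeasure_map hφ.aemeasurable, ae_map_mem_range φ h_range μ, ?_⟩
  rintro _ ⟨g, rfl⟩
  constructor
  · calc (μ.map φ).map (φ g * ·) = (μ.map (g * ·)).map φ := by
          rw [Measure.map_map (measurable_const_mul _) hφ,
            Measure.map_map hφ (measurable_const_mul g)]
          congr 1 with x
          exact (map_mul φ g x).symm
      _ = μ.map φ := by rw [map_mul_left_eq_self]
  · calc (μ.map φ).map (· * φ g) = (μ.map (· * g)).map φ := by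
          rw [Measure.map_map (measurable_mul_const _) hφ,
            Measure.map_map hφ (measurable_mul_const g)]
          congr 1 with x
          exact (map_mul φ x g).symm
      _ = μ.map φ := by rw [map_mul_right_eq_self]

variable {n : ℕ}

lemma norm_le_of_mem_SO {g : Matrix (Fin n) (Fin n) ℝ} (hg : g ∈ SO n) : ‖g‖ ≤ √n := by
  refine Real.le_sqrt_of_sq_le (le_of_eq ?_)
  rw [← trace_transpose_mul_self_eq_norm_sq, transpose_mul_self_of_mem_SO hg, trace_one,
    Fintype.card_fin]

lemma isClosed_SO : IsClosed (SO n) :=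
  (isClosed_eq (by fun_prop) continuous_const).inter (isClosed_eq (by fun_prop) continuous_const)

lemma isCompact_SO : IsCompact (SO n) := by
  refine Metric.isCompact_of_isClosed_isBounded isClosed_SO ?_
  exact isBounded_iff_forall_norm_le.mpr ⟨√n, fun g => norm_le_of_mem_SO⟩

instance compactSpace_specialOrthogonalGroup : CompactSpace (specialOrthogonalGroup (Fin n) ℝ) :=
  isCompact_iff_compactSpace.mp (SO_eq_coe_specialOrthogonalGroup ▸ isCompact_SO)

instance isTopologicalGroup_specialOrthogonalGroup :
    IsTopologicalGroup (specialOrthogonalGroup (Fin n) ℝ) where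
  continuous_inv := (continuous_star.comp continuous_subtype_val).subtype_mk _

lemma exists_isHaarLike_SO (n : ℕ) : ∃ μ, IsHaarLike (SO n) μ := by
  let φ := (specialOrthogonalGroup (Fin n) ℝ).subtype
  have range_subtype : Set.range φ = SO n := by
    rw [SO_eq_coe_specialOrthogonalGroup]
    exact Subtype.range_coe
  let μ : Measure (specialOrthogonalGroup (Fin n) ℝ) := Measure.haarMeasure ⊤
  have : IsProbabilityMeasure μ := ⟨Measure.haarMeasure_self⟩
  have := isMulRightInvariant_of_isHaarMeasure_of_isProbabilityMeasure μ
  refine ⟨μ.map φ, ?_⟩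
  rw [← range_subtype]
  exact isHaarLike_range_map φ measurable_subtype_coe
    (range_subtype ▸ isClosed_SO.measurableSet) μ

lemma isHaarLike_haarLike_SO (n : ℕ) : IsHaarLike (SO n) (haarLike (SO n)) := by
  rw [haarLike, dif_pos (exists_isHaarLike_SO n)]
  exact (exists_isHaarLike_SO n).choose_spec

open Metric

lemma inter_nonempty_of_measure_compl_lt {X : Type*} [MeasurableSpace X] {μ : Measure X}
    [IsProbabilityMeasure μ] {s t : Set X} (hs : μ sᶜ < 2⁻¹) (ht : μ tᶜ < 2⁻¹) :
    (s ∩ t).Nonempty := by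
  by_contra! h_empty
  have : μ Set.univ < 1 := calc
    μ Set.univ = μ (sᶜ ∪ tᶜ) := by rw [← Set.compl_inter, h_empty, Set.compl_empty]
    _ ≤ μ sᶜ + μ tᶜ := measure_union_le _ _
    _ < 2⁻¹ + 2⁻¹ := ENNReal.add_lt_add hs ht
    _ = 1 := ENNReal.inv_two_add_inv_two
  exact this.ne measure_univ

lemma IsHaarLike.SO_subset_cthickening {H : Measure (Matrix (Fin n) (Fin n) ℝ)}
    (hH : IsHaarLike (SO n) H) {S : Finset (Matrix (Fin n) (Fin n) ℝ)} (hS : ↑S ⊆ SO n) {r : ℝ}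
    (hr : 0 ≤ r) (h_half : H (cthickening r (S : Set (Matrix (Fin n) (Fin n) ℝ)))ᶜ < 2⁻¹) :
    SO n ⊆ cthickening (2 * r)
      ((S * S.image transpose : Finset _) : Set (Matrix (Fin n) (Fin n) ℝ)) := by
  intro g hg
  have := hH.1
  set B := cthickening r (S : Set (Matrix (Fin n) (Fin n) ℝ))
  have measurable_B : MeasurableSet B := isClosed_cthickening.measurableSet
  have translate : H ((g * ·) ⁻¹' B)ᶜ < 2⁻¹ := by
    rwa [← Set.preimage_compl, ← Measure.map_apply (measurable_const_mul g) measurable_B.compl,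
      (hH.2.2 g hg).1]
  obtain ⟨x, hgx, hx⟩ := inter_nonempty_of_measure_compl_lt translate h_half
  rw [Set.mem_preimage, mem_cthickening_finset_iff hr] at hgx
  rw [mem_cthickening_finset_iff hr] at hx
  obtain ⟨b, hb, hgb⟩ := hgx
  obtain ⟨c, hc, hxc⟩ := hx
  rw [mem_cthickening_finset_iff (by positivity)]
  refine ⟨b * cᵀ, Finset.mul_mem_mul hb (Finset.mem_image_of_mem _ hc), ?_⟩
  calc dist g (b * cᵀ) = dist (g * c) b := by
        rw [← (isometry_mul_right_of_mem_SO (hS hc)).dist_eq, Matrix.mul_assoc,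
          transpose_mul_self_of_mem_SO (hS hc), Matrix.mul_one]
    _ ≤ dist (g * c) (g * x) + dist (g * x) b := dist_triangle ..
    _ = dist x c + dist (g * x) b := by
        rw [(isometry_mul_left_of_mem_SO hg).dist_eq, dist_comm c x]
    _ ≤ 2 * r := by linarith

end Haar

section Corners

lemma posSemidef_one_sub_of_norm_le_one {ι : Type*} [Fintype ι] [DecidableEq ι]
    {P : Matrix ι ι ℝ} (hP : P.IsSymm) (h_norm : ‖P‖ ≤ 1) : (1 - P).PosSemidef := by
  refine .of_dotProduct_mulVec_nonneg (by simp [IsHermitian, hP.eq]) fun v => ?_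
  have expand : v ⬝ᵥ P *ᵥ v = ∑ q : ι × ι, P q.1 q.2 * (v q.1 * v q.2) := by
    simp only [dotProduct, mulVec, Finset.mul_sum, Fintype.sum_prod_type]
    exact Finset.sum_congr rfl fun i _ => Finset.sum_congr rfl fun k _ => by ring
  have norm_sq : ∑ q : ι × ι, (v q.1 * v q.2) ^ 2 = (v ⬝ᵥ v) ^ 2 := by
    rw [sq (v ⬝ᵥ v), dotProduct, Finset.sum_mul_sum, Fintype.sum_prod_type]
    exact Finset.sum_congr rfl fun i _ => Finset.sum_congr rfl fun k _ => by ring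
  have cauchy_schwarz : (v ⬝ᵥ P *ᵥ v) ^ 2 ≤ (v ⬝ᵥ v) ^ 2 := calc
    (v ⬝ᵥ P *ᵥ v) ^ 2 ≤ ‖P‖ ^ 2 * (v ⬝ᵥ v) ^ 2 := by
      rw [expand, frobenius_norm_sq_eq_sum, ← Fintype.sum_prod_type', ← norm_sq]
      exact Finset.sum_mul_sq_le_sq_mul_sq _ _ _
    _ ≤ (v ⬝ᵥ v) ^ 2 :=
      mul_le_of_le_one_left (sq_nonneg _) (pow_le_one₀ (norm_nonneg P) h_norm)
  have : v ⬝ᵥ P *ᵥ v ≤ v ⬝ᵥ v :=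
    (abs_le_of_sq_le_sq' cauchy_schwarz (Finset.sum_nonneg fun i _ => mul_self_nonneg (v i))).2
  simpa [sub_mulVec, dotProduct_sub] using this

open scoped MatrixOrder in
lemma exists_mul_transpose_eq_of_posSemidef {ι : Type*} [Fintype ι] {S : Matrix ι ι ℝ}
    (hS : S.PosSemidef) : ∃ y : Matrix ι ι ℝ, y * yᵀ = S := by
  classical
  obtain ⟨b, rfl⟩ := CStarAlgebra.nonneg_iff_eq_star_mul_self.mp hS.nonneg
  exact ⟨bᵀ, by simp [star_eq_conjTranspose]⟩

lemma orthonormal_rows_iff {κ ι : Type*} [DecidableEq κ] [Fintype ι] {w : Matrix κ ι ℝ} :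
    Orthonormal ℝ (fun i => WithLp.toLp 2 (w i)) ↔ w * wᵀ = 1 := by
  simp [orthonormal_iff_ite, ← Matrix.ext_iff, mul_apply, one_apply, PiLp.inner_apply, mul_comm]

lemma exists_orthogonal_submatrix_eq {κ ι : Type*} [DecidableEq κ] [Fintype ι] [DecidableEq ι]
    {w : Matrix κ ι ℝ} (hw : w * wᵀ = 1) {f : κ → ι} (hf : Function.Injective f) :
    ∃ a : Matrix ι ι ℝ, a * aᵀ = 1 ∧ a.submatrix f id = w := by
  let v : ι → EuclideanSpace ℝ ι := Function.extend f (fun i => WithLp.toLp 2 (w i)) 0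
  have orthonormal_v : Orthonormal ℝ ((Set.range f).domRestrict v) := by
    have : (Set.range f).domRestrict v =
        (fun i => WithLp.toLp 2 (w i)) ∘ (Equiv.ofInjective f hf).symm := by
      ext1 ⟨_, i, rfl⟩
      simp [v, hf.extend_apply]
    exact this ▸ (orthonormal_rows_iff.mpr hw).comp _ (Equiv.injective _)
  obtain ⟨b, hb⟩ := orthonormal_v.exists_orthonormalBasis_extension_of_card_eq (by simp)
  refine ⟨of fun i => (b i).ofLp, orthonormal_rows_iff.mp b.orthonormal, ?_⟩
  ext i j
  simp [hb (f i) ⟨i, rfl⟩, v, hf.extend_apply]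

variable {n : ℕ}

lemma exists_mem_SO_eq_off_row {a : Matrix (Fin n) (Fin n) ℝ} (ha : a * aᵀ = 1) (r : Fin n) :
    ∃ b ∈ SO n, ∀ i ≠ r, b i = a i := by
  have det_sq : a.det * a.det = 1 := by
    simpa only [det_mul, det_transpose, det_one] using congrArg det ha
  rcases mul_self_eq_one_iff.mp det_sq with h_det | h_det
  · exact ⟨a, ⟨ha, h_det⟩, fun _ _ => rfl⟩
  let d : Fin n → ℝ := Function.update 1 r (-1)
  have d_mul_d : (fun i => d i * d i) = 1 := by
    ext i
    obtain rfl | hi := eq_or_ne i r <;> simp [d, *]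
  refine ⟨diagonal d * a, ⟨?_, ?_⟩, fun i hi => ?_⟩
  · rw [transpose_mul, Matrix.mul_assoc, ← Matrix.mul_assoc a, ha, Matrix.one_mul,
      diagonal_transpose, diagonal_mul_diagonal, d_mul_d]
    exact diagonal_one
  · rw [det_mul, det_diagonal, h_det, Finset.prod_update_of_mem (Finset.mem_univ r)]
    simp
  · ext l
    simp [diagonal_mul, d, hi]

lemma exists_mem_SO_corner_eq {m : ℕ} (hm : 0 < m) (hmn : m + m ≤ n)
    {x : Matrix (Fin m) (Fin m) ℝ} (hx : ‖x * xᵀ‖ ≤ 1) :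
    ∃ a ∈ SO n, a.submatrix (Fin.castLE (by omega)) (Fin.castLE (by omega)) = x := by
  obtain ⟨k, rfl⟩ := Nat.exists_eq_add_of_le hmn
  obtain ⟨y, hy⟩ := exists_mul_transpose_eq_of_posSemidef
    (posSemidef_one_sub_of_norm_le_one (isSymm_mul_transpose_self x) hx)
  let w : Matrix (Fin m) (Fin (m + m + k)) ℝ := of fun i => Fin.append (Fin.append (x i) (y i)) 0
  have hw : w * wᵀ = 1 := by
    rw [← add_sub_cancel (x * xᵀ) 1, ← hy]
    ext i j
    simp only [w, mul_apply, transpose_apply, of_apply, Fin.sum_univ_add, Fin.append_left,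
      Fin.append_right, Pi.zero_apply, mul_zero, Finset.sum_const_zero, add_zero,
      Matrix.add_apply]
  obtain ⟨a, ha, haw⟩ := exists_orthogonal_submatrix_eq hw
    ((Fin.castAdd_injective (m + m) k).comp (Fin.castAdd_injective m m))
  obtain ⟨b, hb, hba⟩ := exists_mem_SO_eq_off_row ha ⟨m, by omega⟩
  refine ⟨b, hb, ?_⟩
  ext i j
  have hi : Fin.castAdd k (Fin.castAdd m i) ≠ ⟨m, by omega⟩ := by
    simp [Fin.ext_iff, i.isLt.ne]
  calc b (Fin.castAdd k (Fin.castAdd m i)) (Fin.castAdd k (Fin.castAdd m j))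
      = w i (Fin.castAdd k (Fin.castAdd m j)) := by rw [hba _ hi, ← haw]; rfl
    _ = x i j := by simp [w]

end Corners

section Gram

variable {ν : Measure ℝ}

lemma integral_pi_eq_zero_of_update_neg {ι E : Type*} [Fintype ι] [DecidableEq ι]
    [NormedAddCommGroup E] [NormedSpace ℝ E] [SigmaFinite ν] [ν.IsNegInvariant] (q : ι)
    {f : (ι → ℝ) → E} (hf : ∀ x, f (Function.update x q (-x q)) = -f x) :
    ∫ x, f x ∂Measure.pi (fun _ : ι => ν) = 0 := by
  let flip (x : ι → ℝ) : ι → ℝ := Function.update x q (-x q)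
  have flip_involutive : Function.Involutive flip := fun x => by simp [flip]
  have flip_preserving : MeasurePreserving flip (Measure.pi fun _ => ν)
      (Measure.pi fun _ => ν) := by
    have flip_eq : flip = fun x i => (if i = q then Neg.neg else id) (x i) := by
      ext x i
      obtain rfl | hi := eq_or_ne i q <;> simp [flip, *]
    rw [flip_eq]
    refine measurePreserving_pi _ _ fun i => ?_
    split_ifs
    · exact Measure.measurePreserving_neg ν
    · exact .id ν
  have integral_flip := flip_preserving.integral_comp
    (MeasurableEquiv.ofInvolutive flip flip_involutive
      flip_preserving.measurable).measurableEmbedding f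
  simp only [flip, hf, integral_neg] at integral_flip
  have : IsAddTorsionFree E := .of_isTorsionFree ℝ E
  exact neg_eq_self.mp integral_flip

variable [IsProbabilityMeasure ν] {s : ℝ}

lemma ae_pi_forall_abs_le {ι : Type*} [Fintype ι] (hs : ∀ᵐ x ∂ν, |x| ≤ s) :
    ∀ᵐ x ∂Measure.pi (fun _ : ι => ν), ∀ q, |x q| ≤ s :=
  eventually_all.mpr fun q => (Measure.tendsto_eval_ae_ae (μ := fun _ => ν) (i := q)).eventually hs

variable {κ ι : Type*} [Fintype κ] [Fintype ι]

lemma norm_mul_transpose_sq_eq_sum (x : κ × ι → ℝ) :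
    ‖of x.curry * (of x.curry)ᵀ‖ ^ 2 =
      ∑ p : (κ × κ) × (ι × ι),
        x (p.1.1, p.2.1) * x (p.1.2, p.2.1) * (x (p.1.1, p.2.2) * x (p.1.2, p.2.2)) := by
  rw [frobenius_norm_sq_eq_sum]
  simp only [mul_apply, transpose_apply, of_apply, Function.curry_apply, sq, Finset.sum_mul_sum,
    Fintype.sum_prod_type]

lemma ae_pi_abs_mul_mul_mul_le (hs : ∀ᵐ x ∂ν, |x| ≤ s) (a b c d : ι) :
    ∀ᵐ x ∂Measure.pi (fun _ : ι => ν), |x a * x b * (x c * x d)| ≤ s ^ 4 := by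
  filter_upwards [ae_pi_forall_abs_le hs] with x hx
  have hs0 : 0 ≤ s := (abs_nonneg _).trans (hx a)
  calc |x a * x b * (x c * x d)| = |x a| * |x b| * (|x c| * |x d|) := by simp only [abs_mul]
    _ ≤ s * s * (s * s) := by gcongr <;> exact hx _
    _ = s ^ 4 := by ring

lemma integrable_pi_mul_mul_mul (hs : ∀ᵐ x ∂ν, |x| ≤ s) (a b c d : ι) :
    Integrable (fun x : ι → ℝ => x a * x b * (x c * x d)) (Measure.pi fun _ => ν) :=
  .of_bound (by fun_prop) _ (ae_pi_abs_mul_mul_mul_le hs a b c d)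

lemma integral_pi_mul_mul_mul_le [ν.IsNegInvariant] [DecidableEq κ] [DecidableEq ι]
    (hs : ∀ᵐ x ∂ν, |x| ≤ s) (i k : κ) (j l : ι) :
    ∫ x, x (i, j) * x (k, j) * (x (i, l) * x (k, l)) ∂Measure.pi (fun _ : κ × ι => ν) ≤
      (if i = k then s ^ 4 else 0) + if j = l then s ^ 4 else 0 := by
  have s4_nonneg : 0 ≤ s ^ 4 := by positivity
  by_cases h : i = k ∨ j = l
  · have integral_le : ∫ x, x (i, j) * x (k, j) * (x (i, l) * x (k, l))
        ∂Measure.pi (fun _ : κ × ι => ν) ≤ s ^ 4 := by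
      refine (Real.le_norm_self _).trans ((norm_integral_le_of_norm_le_const
        (ae_pi_abs_mul_mul_mul_le hs _ _ _ _)).trans ?_)
      simp
    refine integral_le.trans ?_
    rcases h with h | h <;> simp only [h, if_true] <;> split_ifs <;> linarith
  · push Not at h
    rw [integral_pi_eq_zero_of_update_neg (i, j) fun x => ?_]
    · simp [h.1, h.2]
    · simp [h.1.symm, h.2.symm]

lemma integrable_norm_mul_transpose_sq (hs : ∀ᵐ x ∂ν, |x| ≤ s) :
    Integrable (fun x : κ × ι → ℝ => ‖of x.curry * (of x.curry)ᵀ‖ ^ 2)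
      (Measure.pi fun _ => ν) := by
  simp only [norm_mul_transpose_sq_eq_sum]
  exact integrable_finsetSum _ fun p _ => integrable_pi_mul_mul_mul hs _ _ _ _

lemma integral_norm_mul_transpose_sq_le [ν.IsNegInvariant] (hs : ∀ᵐ x ∂ν, |x| ≤ s) :
    ∫ x, ‖of x.curry * (of x.curry)ᵀ‖ ^ 2 ∂Measure.pi (fun _ : κ × ι => ν) ≤
      Fintype.card κ * Fintype.card ι * (Fintype.card κ + Fintype.card ι) * s ^ 4 := by
  classical
  simp only [norm_mul_transpose_sq_eq_sum]
  rw [integral_finsetSum _ fun p _ => integrable_pi_mul_mul_mul hs _ _ _ _]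
  simp only [Fintype.sum_prod_type]
  calc _ ≤ ∑ i : κ, ∑ k : κ, ∑ j : ι, ∑ l : ι,
        ((if i = k then s ^ 4 else 0) + if j = l then s ^ 4 else 0) := by
        gcongr
        exact integral_pi_mul_mul_mul_le hs _ _ _ _
    _ = _ := by
        simp [Finset.sum_add_distrib]
        ring

lemma half_le_measureReal_norm_mul_transpose_le_one [ν.IsNegInvariant]
    (hs : ∀ᵐ x ∂ν, |x| ≤ s)
    (h_card : Fintype.card κ * Fintype.card ι * (Fintype.card κ + Fintype.card ι) * s ^ 4 ≤ 1 / 2) :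
    1 / 2 ≤ (Measure.pi fun _ : κ × ι => ν).real {x | ‖of x.curry * (of x.curry)ᵀ‖ ≤ 1} := by
  have markov := mul_meas_ge_le_integral_of_nonneg
    (ae_of_all _ fun x : κ × ι → ℝ => sq_nonneg ‖of x.curry * (of x.curry)ᵀ‖)
    (integrable_norm_mul_transpose_sq hs) 1
  have univ_subset : (Set.univ : Set (κ × ι → ℝ)) ⊆
      {x | ‖of x.curry * (of x.curry)ᵀ‖ ≤ 1} ∪ {x | 1 ≤ ‖of x.curry * (of x.curry)ᵀ‖ ^ 2} :=
    fun x _ => (le_total ‖of x.curry * (of x.curry)ᵀ‖ 1).imp id (one_le_pow₀ ·)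
  have := (measureReal_mono univ_subset).trans
    (measureReal_union_le (μ := Measure.pi fun _ => ν) _ _)
  rw [probReal_univ] at this
  linarith [integral_norm_mul_transpose_sq_le (κ := κ) (ι := ι) hs]

end Gram

section SmallBall

variable {ν : Measure ℝ} {C : NNReal}

lemma integral_exp_neg_mul_sub_sq_le (hν : ν ≤ C • volume) {l : ℝ} (hl : 0 < l) (b : ℝ) :
    ∫ x, Real.exp (-l * (x - b) ^ 2) ∂ν ≤ C * √(Real.pi / l) := by
  have h_int : Integrable fun x : ℝ => Real.exp (-l * (x - b) ^ 2) :=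
    (integrable_exp_neg_mul_sq hl).comp_sub_right b
  calc ∫ x, Real.exp (-l * (x - b) ^ 2) ∂ν
      ≤ ∫ x, Real.exp (-l * (x - b) ^ 2) ∂(C • volume) :=
        integral_mono_measure hν (ae_of_all _ fun x => (Real.exp_pos _).le)
          h_int.smul_measure_nnreal
    _ = C * √(Real.pi / l) := by
        rw [integral_smul_nnreal_measure,
          integral_sub_right_eq_self (fun x => Real.exp (-l * x ^ 2)), integral_gaussian,
          NNReal.smul_def, smul_eq_mul]

variable {ι : Type*} [Fintype ι]

lemma integrable_pi_exp_neg_mul_sum_sq [IsFiniteMeasure ν] {l : ℝ} (hl : 0 ≤ l) (b : ι → ℝ) :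
    Integrable (fun x => Real.exp (-l * ∑ q, (x q - b q) ^ 2)) (Measure.pi fun _ : ι => ν) := by
  refine .of_bound (C := 1) (by fun_prop : Measurable _).aestronglyMeasurable
    (ae_of_all _ fun x => ?_)
  rw [Real.norm_of_nonneg (Real.exp_pos _).le, Real.exp_le_one_iff, neg_mul, neg_nonpos]
  positivity

lemma integral_pi_exp_neg_mul_sum_sq_le [SigmaFinite ν] (hν : ν ≤ C • volume) {l : ℝ}
    (hl : 0 < l) (b : ι → ℝ) :
    ∫ x, Real.exp (-l * ∑ q, (x q - b q) ^ 2) ∂Measure.pi (fun _ : ι => ν) ≤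
      (C * √(Real.pi / l)) ^ Fintype.card ι := by
  simp only [Finset.mul_sum, Real.exp_sum]
  rw [integral_fintype_prod_eq_prod fun q x => Real.exp (-l * (x - b q) ^ 2)]
  refine (Finset.prod_le_prod (fun q _ => integral_nonneg fun x => (Real.exp_pos _).le)
    fun q _ => integral_exp_neg_mul_sub_sq_le hν hl (b q)).trans_eq ?_
  rw [Finset.prod_const, Finset.card_univ]

lemma measureReal_pi_sum_sq_le_le_exp_mul [IsFiniteMeasure ν] (hν : ν ≤ C • volume) {l : ℝ}
    (hl : 0 < l) (b : ι → ℝ) (r : ℝ) :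
    (Measure.pi fun _ => ν).real {x | ∑ q, (x q - b q) ^ 2 ≤ r ^ 2} ≤
      Real.exp (l * r ^ 2) * (C * √(Real.pi / l)) ^ Fintype.card ι := by
  let f (x : ι → ℝ) : ℝ := Real.exp (-l * ∑ q, (x q - b q) ^ 2)
  have ball_subset : {x | ∑ q, (x q - b q) ^ 2 ≤ r ^ 2} ⊆ {x | Real.exp (-l * r ^ 2) ≤ f x} := by
    intro x hx
    rw [Set.mem_ofPred_eq, Real.exp_le_exp, neg_mul, neg_mul]
    exact neg_le_neg <| mul_le_mul_of_nonneg_left hx hl.le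
  have markov := mul_meas_ge_le_integral_of_nonneg (ae_of_all _ fun x => (Real.exp_pos _).le)
    (integrable_pi_exp_neg_mul_sum_sq (ν := ν) hl.le b) (Real.exp (-l * r ^ 2))
  calc (Measure.pi fun _ => ν).real {x | ∑ q, (x q - b q) ^ 2 ≤ r ^ 2}
      ≤ (Measure.pi fun _ => ν).real {x | Real.exp (-l * r ^ 2) ≤ f x} :=
        measureReal_mono ball_subset
    _ = Real.exp (l * r ^ 2) * (Real.exp (-l * r ^ 2) *
          (Measure.pi fun _ => ν).real {x | Real.exp (-l * r ^ 2) ≤ f x}) := by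
        rw [← mul_assoc, ← Real.exp_add, neg_mul, add_neg_cancel, Real.exp_zero, one_mul]
    _ ≤ Real.exp (l * r ^ 2) * (C * √(Real.pi / l)) ^ Fintype.card ι := by
        gcongr
        exact markov.trans (integral_pi_exp_neg_mul_sum_sq_le hν hl b)

lemma measureReal_pi_sum_sq_le_le [Nonempty ι] [IsFiniteMeasure ν] (hν : ν ≤ C • volume)
    {r : ℝ} (hr : 0 < r) (b : ι → ℝ) :
    (Measure.pi fun _ => ν).real {x | ∑ q, (x q - b q) ^ 2 ≤ r ^ 2} ≤
      (C * √(2 * Real.pi * Real.exp 1 / Fintype.card ι) * r) ^ Fintype.card ι := by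
  set N := Fintype.card ι
  have hN : (0 : ℝ) < N := by exact_mod_cast Fintype.card_pos
  -- The minimiser of the Chernoff bound `exp (l * r ^ 2) * (C * √(π / l)) ^ N`.
  let l : ℝ := N / (2 * r ^ 2)
  have exp_eq : Real.exp (l * r ^ 2) = √(Real.exp 1) ^ N := by
    rw [Real.sqrt_eq_rpow, ← Real.exp_mul, ← Real.exp_nat_mul]
    congr 1
    simp only [l]
    field_simp
  have base_eq : √(Real.exp 1) * √(Real.pi / l) = √(2 * Real.pi * Real.exp 1 / N) * r := calc
    √(Real.exp 1) * √(Real.pi / l) = √(2 * Real.pi * Real.exp 1 / N * r ^ 2) := by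
      rw [← Real.sqrt_mul (Real.exp_pos 1).le]
      congr 1
      simp only [l]
      field_simp
    _ = √(2 * Real.pi * Real.exp 1 / N) * r := by
      rw [Real.sqrt_mul (by positivity), Real.sqrt_sq hr.le]
  refine (measureReal_pi_sum_sq_le_le_exp_mul hν (by positivity : 0 < l) b r).trans_eq ?_
  rw [exp_eq, ← mul_pow, mul_left_comm, base_eq, ← mul_assoc]

end SmallBall

section Entropy

open ProbabilityTheory

lemma isNegInvariant_cond {G : Type*} [MeasurableSpace G] [InvolutiveNeg G] [MeasurableNeg G]
    {μ : Measure G} [μ.IsNegInvariant] {s : Set G} (hs : MeasurableSet s) (h_neg : -s = s) :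
    μ[|s].IsNegInvariant := by
  have := (Measure.measurePreserving_neg μ).restrict_preimage hs
  rw [Set.neg_preimage, h_neg] at this
  exact ⟨(this.smul_measure _).map_eq⟩

/-- The uniform probability measure on `[-s, s]`, the law of the entries of a random corner. -/
def uniformIcc (s : ℝ) : Measure ℝ := volume[|Set.Icc (-s) s]

instance isNegInvariant_uniformIcc (s : ℝ) : (uniformIcc s).IsNegInvariant :=
  isNegInvariant_cond measurableSet_Icc (by simp)

lemma ae_uniformIcc_abs_le (s : ℝ) : ∀ᵐ x ∂uniformIcc s, |x| ≤ s :=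
  (ae_cond_mem measurableSet_Icc).mono fun _ => abs_le.mpr

lemma isProbabilityMeasure_uniformIcc {s : ℝ} (hs : 0 < s) : IsProbabilityMeasure (uniformIcc s) :=
  cond_isProbabilityMeasure_of_finite (by simp [hs]) (by simp)

lemma uniformIcc_le_smul_volume {s : ℝ} (hs : 0 < s) :
    uniformIcc s ≤ (2 * s).toNNReal⁻¹ • volume := by
  rw [uniformIcc, ProbabilityTheory.cond, Real.volume_Icc, sub_neg_eq_add, ← two_mul,
    ENNReal.ofReal, ← ENNReal.coe_inv (by simp [hs])]
  exact smul_mono_right _ Measure.restrict_le_self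

lemma measureReal_pi_uniformIcc_norm_sub_le_le {m : ℕ} (hm : 0 < m) {s r : ℝ} (hs : 0 < s)
    (hr : 0 < r) (b : Matrix (Fin m) (Fin m) ℝ) :
    (Measure.pi fun _ => uniformIcc s).real {x | ‖of x.curry - b‖ ≤ r} ≤
      (√(2 * Real.pi * Real.exp 1) * r / (2 * s * m)) ^ m ^ 2 := by
  have := isProbabilityMeasure_uniformIcc hs
  have : Nonempty (Fin m × Fin m) := ⟨⟨0, hm⟩, ⟨0, hm⟩⟩
  have norm_sub_le_iff (x : Fin m × Fin m → ℝ) :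
      ‖of x.curry - b‖ ≤ r ↔ ∑ q, (x q - b q.1 q.2) ^ 2 ≤ r ^ 2 := by
    rw [← sq_le_sq₀ (norm_nonneg _) hr.le, frobenius_norm_sq_eq_sum, Fintype.sum_prod_type]
    rfl
  simp only [norm_sub_le_iff]
  refine (measureReal_pi_sum_sq_le_le (uniformIcc_le_smul_volume hs) hr _).trans_eq ?_
  rw [Fintype.card_prod, Fintype.card_fin, ← sq, Nat.cast_pow, Real.sqrt_div' _ (sq_nonneg _),
    Real.sqrt_sq (Nat.cast_nonneg m), NNReal.coe_inv, Real.coe_toNNReal _ (by positivity)]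
  congr 1
  field_simp

variable {n m : ℕ} {r : ℝ} {T : Finset (Matrix (Fin n) (Fin n) ℝ)}

open Metric

lemma half_le_card_mul_of_SO_subset_cthickening (hm : 0 < m) (hmn : m + m ≤ n) {s : ℝ}
    (hs : 0 < s) (hms : 4 * m ^ 3 * s ^ 4 ≤ 1) (hr : 0 < r) (hT : SO n ⊆ cthickening r T) :
    1 / 2 ≤ T.card * (√(2 * Real.pi * Real.exp 1) * r / (2 * s * m)) ^ m ^ 2 := by
  have := isProbabilityMeasure_uniformIcc hs
  let corner : Fin m → Fin n := Fin.castLE (by omega)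
  have corner_injective : Function.Injective corner := Fin.castLE_injective _
  let P : Measure (Fin m × Fin m → ℝ) := .pi fun _ => uniformIcc s
  let ball (b : Matrix (Fin m) (Fin m) ℝ) : Set (Fin m × Fin m → ℝ) :=
    {x | ‖of x.curry - b‖ ≤ r}
  have subset_balls : {x : Fin m × Fin m → ℝ | ‖of x.curry * (of x.curry)ᵀ‖ ≤ 1} ⊆
      ⋃ b ∈ T, ball (b.submatrix corner corner) := by
    intro x hx
    obtain ⟨a, ha, hax⟩ := exists_mem_SO_corner_eq hm hmn hx
    obtain ⟨b, hb, hab⟩ := (mem_cthickening_finset_iff hr.le).mp (hT ha)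
    refine Set.mem_biUnion hb ?_
    rw [dist_eq_norm] at hab
    change ‖of x.curry - b.submatrix corner corner‖ ≤ r
    rw [← hax]
    exact (frobenius_norm_submatrix_le (a - b) corner_injective corner_injective).trans hab
  calc 1 / 2 ≤ P.real {x | ‖of x.curry * (of x.curry)ᵀ‖ ≤ 1} :=
        half_le_measureReal_norm_mul_transpose_le_one (ae_uniformIcc_abs_le s)
          (by rw [Fintype.card_fin]; linarith)
    _ ≤ P.real (⋃ b ∈ T, ball (b.submatrix corner corner)) :=
        measureReal_mono subset_balls (measure_ne_top _ _)
    _ ≤ ∑ b ∈ T, P.real (ball (b.submatrix corner corner)) := measureReal_biUnion_finset_le _ _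
    _ ≤ _ := by
        rw [← nsmul_eq_mul]
        exact Finset.sum_le_card_nsmul _ _ _ fun b _ =>
          measureReal_pi_uniformIcc_norm_sub_le_le hm hs hr _

lemma div_pow_le_card_pow_of_SO_subset_cthickening (hm : 0 < m) (hmn : m + m ≤ n) (hr : 0 < r)
    (hT : SO n ⊆ cthickening r T) : (m / (81 * r ^ 4)) ^ m ^ 2 ≤ 16 * (T.card : ℝ) ^ 4 := by
  have : (0 : ℝ) < m := by exact_mod_cast hm
  obtain ⟨s, hs, hs4⟩ : ∃ s : ℝ, 0 < s ∧ s ^ 4 = (4 * m ^ 3 : ℝ)⁻¹ :=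
    ⟨(4 * m ^ 3 : ℝ)⁻¹ ^ ((4 : ℕ) : ℝ)⁻¹, by positivity,
      Real.rpow_inv_natCast_pow (by positivity) four_ne_zero⟩
  have half_le := half_le_card_mul_of_SO_subset_cthickening hm hmn hs
    (by rw [hs4]; exact (mul_inv_cancel₀ (by positivity)).le) hr hT
  have two_pi_e_le : 2 * Real.pi * Real.exp 1 ≤ 18 := by
    nlinarith [Real.pi_lt_d2, Real.exp_one_lt_d9, Real.pi_pos]
  have base_pow_le : (√(2 * Real.pi * Real.exp 1) * r / (2 * s * m)) ^ 4 ≤ 81 * r ^ 4 / m := calc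
    _ = (2 * Real.pi * Real.exp 1) ^ 2 * r ^ 4 / (16 * s ^ 4 * m ^ 4) := by
      rw [div_pow, mul_pow, pow_mul _ 2 2, Real.sq_sqrt (by positivity)]
      ring
    _ ≤ 18 ^ 2 * r ^ 4 / (16 * s ^ 4 * m ^ 4) := by gcongr
    _ = 81 * r ^ 4 / m := by
      rw [hs4]
      field_simp
      norm_num
  have : (1 / 2 : ℝ) ^ 4 ≤ T.card ^ 4 * (81 * r ^ 4 / m) ^ m ^ 2 := calc
    (1 / 2 : ℝ) ^ 4 ≤ (T.card * (√(2 * Real.pi * Real.exp 1) * r / (2 * s * m)) ^ m ^ 2) ^ 4 := by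
      gcongr
    _ = T.card ^ 4 * ((√(2 * Real.pi * Real.exp 1) * r / (2 * s * m)) ^ 4) ^ m ^ 2 := by
      rw [mul_pow, pow_right_comm]
    _ ≤ _ := by gcongr
  rw [← inv_div, inv_pow, inv_le_iff_one_le_mul₀ (by positivity)]
  linarith

end Entropy

section Counting

variable {n t : ℕ}

/-- The matrices `a * bᵀ`, for `a` and `b` products of `t` rotations by multiples of
`2π / (9 n²)`. They cover `SO(n)` up to a bounded error if `t` steps of the walk mix; the mesh of
the angles is chosen such that `t ≤ n²` roundings displace such a product by at most `1`. -/
def quotientNet (n t : ℕ) : Finset (Matrix (Fin n) (Fin n) ℝ) :=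
  (gridRotations n (9 * n ^ 2) ^ t) * (gridRotations n (9 * n ^ 2) ^ t).image transpose

lemma card_gridRotations_le_pow (hn : 10 ≤ n) : (gridRotations n (9 * n ^ 2)).card ≤ n ^ 5 := by
  have card_pairs_le : (pairs n).card ≤ n ^ 2 := by
    simpa [sq] using Finset.card_le_univ (pairs n)
  calc (gridRotations n (9 * n ^ 2)).card
    _ ≤ (pairs n).card * (9 * n ^ 2 + 1) := card_gridRotations_le n _
    _ ≤ n ^ 2 * (n * n ^ 2) := by
      gcongr
      nlinarith
    _ = n ^ 5 := by ring

lemma card_quotientNet_le (hn : 10 ≤ n) : (quotientNet n t).card ≤ n ^ (10 * t) := by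
  have card_pow_le : (gridRotations n (9 * n ^ 2) ^ t).card ≤ n ^ (5 * t) :=
    Finset.card_pow_le.trans (by rw [pow_mul]; gcongr; exact card_gridRotations_le_pow hn)
  calc (quotientNet n t).card
    _ ≤ n ^ (5 * t) * n ^ (5 * t) :=
      Finset.card_mul_le.trans (Nat.mul_le_mul card_pow_le (Finset.card_image_le.trans card_pow_le))
    _ = n ^ (10 * t) := by ring

lemma sq_le_of_SO_subset_cthickening_quotientNet (hn : 10 ^ 10 ≤ n)
    (h_cover : SO n ⊆ Metric.cthickening 4 (quotientNet n t)) : n ^ 2 ≤ 720 * t := by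
  set m := n / 2
  have n_le : n ≤ 3 * m := by omega
  have n_cast_le : (n : ℝ) ≤ 3 * m := by exact_mod_cast n_le
  have n_cast_ge : (10 ^ 10 : ℝ) ≤ n := by exact_mod_cast hn
  have div_pow_le := div_pow_le_card_pow_of_SO_subset_cthickening (by omega : 0 < m)
    (by omega) four_pos h_cover
  have n_le_div_sq : (n : ℝ) ≤ (m / (81 * 4 ^ 4)) ^ 2 := by nlinarith
  have pow_lt : (n : ℝ) ^ m ^ 2 < n ^ (80 * t + 1) := calc
    (n : ℝ) ^ m ^ 2 ≤ ((m / (81 * 4 ^ 4)) ^ m ^ 2) ^ 2 := by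
      rw [pow_right_comm]
      gcongr
    _ ≤ (16 * ((n : ℝ) ^ (10 * t)) ^ 4) ^ 2 := by
      grw [div_pow_le, card_quotientNet_le (by omega)]
      rw [Nat.cast_pow]
    _ = 256 * n ^ (80 * t) := by ring
    _ < n * n ^ (80 * t) := by
      gcongr
      linarith
    _ = n ^ (80 * t + 1) := by ring
  have sq_lt : m ^ 2 < 80 * t + 1 := (pow_lt_pow_iff_right₀ (by linarith)).mp pow_lt
  nlinarith

lemma not_SO_subset_cthickening_one (hn : 2 ≤ n) :
    ¬ SO n ⊆ Metric.cthickening 2 {(1 : Matrix (Fin n) (Fin n) ℝ)} := by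
  intro h_cover
  let i : Fin n := ⟨0, by omega⟩
  let j : Fin n := ⟨1, by omega⟩
  have hij : i ≠ j := by simp [i, j]
  have dist_le : dist (kacRot i j Real.pi) 1 ≤ 2 := by
    simpa using h_cover (kacRot_mem_SO hij Real.pi)
  have dist_sq : dist (kacRot i j Real.pi) 1 ^ 2 = 8 := by
    rw [dist_eq_norm, norm_kacRot_sub_one_sq hij, Real.cos_pi]
    norm_num
  nlinarith [dist_nonneg (x := kacRot i j Real.pi) (y := 1)]

lemma not_SO_subset_cthickening_quotientNet (hn : 2 ≤ n) (ht : (t : ℝ) < 1 / 10 ^ 20 * n ^ 2) :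
    ¬ SO n ⊆ Metric.cthickening (2 * (t * (9 / (9 * n ^ 2 : ℕ)) + 1)) (quotientNet n t) := by
  intro h_cover
  rcases lt_or_ge n (10 ^ 10) with n_lt | n_ge
  · obtain rfl : t = 0 := by
      have n_cast_lt : (n : ℝ) < 10 ^ 10 := by exact_mod_cast n_lt
      have : (t : ℝ) < 1 := by nlinarith
      exact Nat.lt_one_iff.mp (by exact_mod_cast this)
    refine not_SO_subset_cthickening_one hn ?_
    simpa [quotientNet] using h_cover
  · have n_sq_pos : (0 : ℝ) < n ^ 2 := by positivity
    have radius_le : 2 * (t * (9 / (9 * n ^ 2 : ℕ)) + 1) ≤ (4 : ℝ) := by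
      have : (t : ℝ) / n ^ 2 ≤ 1 := by
        rw [div_le_one n_sq_pos]
        linarith
      calc (2 * (t * (9 / (9 * n ^ 2 : ℕ)) + 1) : ℝ)
        _ = 2 * (t / n ^ 2 + 1) := by
          push_cast
          field_simp
        _ ≤ 4 := by linarith
    have n_sq_le : (n : ℝ) ^ 2 ≤ 720 * t := by
      exact_mod_cast sq_le_of_SO_subset_cthickening_quotientNet n_ge
        (h_cover.trans (Metric.cthickening_mono radius_le _))
    linarith

end Counting

/-- **Theorem 2.** There are constants `c, ε₀ > 0` such that for every `n ≥ 2`, Kac's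
random walk on `SO(n)` satisfies `τ_{hs,1}(ε₀) ≥ c n²`: for every integer `t < c n²`
there is a probability measure `μ` on `SO(n)` whose time-`t` distribution is at
`L¹`-transportation-cost distance greater than `ε₀` from the Haar measure (w.r.t. the
Hilbert–Schmidt metric). -/
theorem kac_walk_mixing_time_lower_bound :
    ∃ c : ℝ, 0 < c ∧ ∃ ε₀ : ℝ, 0 < ε₀ ∧
      ∀ n : ℕ, 2 ≤ n → ∀ t : ℕ, (t : ℝ) < c * (n : ℝ) ^ 2 →
        ∃ μ : Measure (Matrix (Fin n) (Fin n) ℝ),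
          IsProbabilityMeasure μ ∧ μ (SO n)ᶜ = 0 ∧
            ENNReal.ofReal ε₀ <
              wassersteinE hsDist 1 (kernelIterate (kacKernel n) t μ)
                (haarLike (SO n)) := by
  refine ⟨1 / 10 ^ 20, by norm_num, 1 / 4, by norm_num, fun n hn t ht => ⟨Measure.dirac 1,
    inferInstance, by simp [one_mem_SO], ?_⟩⟩
  have grid_ne_zero : 9 * n ^ 2 ≠ 0 := by positivity
  by_contra! h_close
  refine not_SO_subset_cthickening_quotientNet hn ht <|
    (isHaarLike_haarLike_SO n).SO_subset_cthickening ?_ (by positivity) ?_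
  · exact pow_subset_SO (gridRotations_subset_SO n _) t
  · have transport := ofReal_mul_measure_compl_cthickening_le_wassersteinE (by positivity)
      zero_le_one one_pos (ae_kernelIterate_kacKernel_mem_cthickening (n := n) grid_ne_zero t)
      (H := haarLike (SO n))
    rw [← hsDist_eq_edist, ENNReal.ofReal_one, one_mul, div_one, ENNReal.rpow_one] at transport
    refine (transport.trans h_close).trans_lt ?_
    rw [ENNReal.ofReal_lt_iff_lt_toReal (by norm_num) (by simp)]
    norm_num

end
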